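/- Let λ be an l-restricted partition and m a positive integer. Then ℓ(Mull(λ')) ≤ m if and only if λ can be written as a sum λ = λ^1 + … + λ^t of partitions, where for each 1 ≤ i ≤ t the partition λ^i is l-restricted and m_i-distinguished for some integer 0 < m_i < l, and m = m_1 + … + m_t. (In the paper's terminology, ℓ(Mull(λ')) ≤ m is the condition that the restricted partition λ is m-special, i.e. that the irreducible polynomial module L(λ) for the quantum general linear group is a composition factor of the m-fold tensor power of the truncated symmetric algebra of the natural module.) -/

import Mathlib

noncomputable section

/-- `p : ℕ → ℕ` represents the partition `λ` with `p i = λ_{i+1}` (0-indexed parts):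
a weakly decreasing, eventually zero sequence. -/
def IsPartition (p : ℕ → ℕ) : Prop :=
  (∀ i j, i ≤ j → p j ≤ p i) ∧ ∃ N, ∀ i, N ≤ i → p i = 0

/-- `ℓ(λ)`, the number of nonzero parts. -/
def plen (p : ℕ → ℕ) : ℕ := sInf {N | p N = 0}

/-- the degree (number of boxes) of the partition. -/
def pdeg (p : ℕ → ℕ) : ℕ := ∑ i ∈ Finset.range (plen p), p i

/-- `λ` is `l`-regular: no `l` consecutive parts are equal and nonzero. -/
def IsLRegular (l : ℕ) (p : ℕ → ℕ) : Prop :=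
  ∀ i, p i ≠ 0 → p (i + l - 1) ≠ p i

/-- `λ` is `l`-restricted: `λ_i - λ_{i+1} < l` for all `i`. -/
def IsLRestricted (l : ℕ) (p : ℕ → ℕ) : Prop :=
  ∀ i, p i - p (i + 1) < l

/-- the transpose (conjugate) partition. -/
def conjP (p : ℕ → ℕ) : ℕ → ℕ :=
  fun j => ((Finset.range (plen p)).filter fun i => j < p i).card

/-- the minimal `h ≥ 1` with `λ_1 - λ_{h+1} + h ≥ l`: when `e(λ) > l`, the first
`l`-segment of the `l`-edge lies in rows `1, …, h`. -/
def firstSeg (l : ℕ) (p : ℕ → ℕ) : ℕ := sInf {h | 1 ≤ h ∧ l ≤ p 0 - p h + h}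

/-- removal of the `l`-edge (with fuel): if `e(λ) ≤ l` the whole edge is removed,
otherwise the first `l`-segment is removed from rows `1, …, h` (`h = firstSeg`) and one
recurses on `(λ_{h+1}, λ_{h+2}, …)`. -/
def removeLEdgeAux (l : ℕ) : ℕ → (ℕ → ℕ) → ℕ → ℕ
  | 0, _ => fun _ => 0
  | n + 1, p =>
    if p 0 = 0 then fun _ => 0
    else if p 0 + plen p - 1 ≤ l then fun i => p (i + 1) - 1
    else fun i =>
      if i + 1 < firstSeg l p then p (i + 1) - 1
      else if i + 1 = firstSeg l p then p 0 + firstSeg l p - 1 - l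
      else removeLEdgeAux l n (fun j => p (j + firstSeg l p)) (i - firstSeg l p)

/-- the partition obtained by removing the `l`-edge of `λ`. -/
def removeLEdge (l : ℕ) (p : ℕ → ℕ) : ℕ → ℕ := removeLEdgeAux l (plen p) p

/-- `e_l(λ)`, the number of nodes of the `l`-edge. -/
def elen (l : ℕ) (p : ℕ → ℕ) : ℕ := pdeg p - pdeg (removeLEdge l p)

/-- the length of `Mull(λ)` prescribed by the defining recursion of the Mullineux map. -/
def mullLen (l : ℕ) (p : ℕ → ℕ) : ℕ :=
  if l ∣ elen l p then elen l p - plen p else elen l p - plen p + 1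

/-- the Mullineux map (with fuel): `Mull(0) = 0` and, for `λ ≠ 0` `l`-regular with `ν`
obtained from `λ` by removing the `l`-edge, `Mull(λ)` is the unique `l`-regular partition
whose `l`-edge removal leaves `Mull(ν)` and whose length is `e_l(λ) - ℓ(λ)` if
`l ∣ e_l(λ)` and `e_l(λ) - ℓ(λ) + 1` otherwise. -/
def mullAux (l : ℕ) : ℕ → (ℕ → ℕ) → ℕ → ℕ
  | 0, _ => fun _ => 0
  | n + 1, p =>
    if p 0 = 0 then fun _ => 0
    else
      Classical.epsilon fun μ : ℕ → ℕ =>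
        IsPartition μ ∧ IsLRegular l μ ∧
          removeLEdge l μ = mullAux l n (removeLEdge l p) ∧ plen μ = mullLen l p

/-- the Mullineux map. -/
def mull (l : ℕ) (p : ℕ → ℕ) : ℕ → ℕ := mullAux l (pdeg p) p

/-- the list of Mullineux components (with fuel). -/
def mullCompsAux (l : ℕ) : ℕ → (ℕ → ℕ) → List (ℕ → ℕ)
  | 0, _ => []
  | n + 1, p =>
    if p 0 = 0 then []
    else if elen l p ≤ l then [p]
    else (fun i => if i < firstSeg l p then p i else 0) ::
      mullCompsAux l n (fun j => p (j + firstSeg l p))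

/-- the Mullineux components of `λ`. -/
def mullComps (l : ℕ) (p : ℕ → ℕ) : List (ℕ → ℕ) := mullCompsAux l (plen p) p

/-- edge `l`-connectedness (with fuel): consecutive Mullineux components `α, ρ` satisfy
`α_1 - ρ_1 + ℓ(α) = l`. -/
def edgeConnAux (l : ℕ) : ℕ → (ℕ → ℕ) → Prop
  | 0, _ => True
  | n + 1, p =>
    if elen l p ≤ l then True
    else p 0 + firstSeg l p = l + p (firstSeg l p) ∧
      edgeConnAux l n fun j => p (j + firstSeg l p)

/-- `λ` is edge `l`-connected. -/
def EdgeLConnected (l : ℕ) (p : ℕ → ℕ) : Prop := edgeConnAux l (plen p) p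

/-- the node `(i+1, λ_{i+1})` (in row `i+1`, 1-indexed) is a removable node. -/
def Removable (p : ℕ → ℕ) (i : ℕ) : Prop := p (i + 1) < p i

/-- removal of the removable node in row `i+1`. -/
def removeNode (p : ℕ → ℕ) (i : ℕ) : ℕ → ℕ := fun k => if k = i then p i - 1 else p k

/-- there is an addable node `(i+1, λ_{i+1} + 1)` in row `i+1` (1-indexed). -/
def Addable (p : ℕ → ℕ) (i : ℕ) : Prop := i ≤ plen p ∧ (i = 0 ∨ p i < p (i - 1))

/-- the removable node in row `i+1` is suitable: its residue (mod `l`) differs from the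
residue of every lower addable node. -/
def Suitable (l : ℕ) (p : ℕ → ℕ) (i : ℕ) : Prop :=
  Removable p i ∧ ∀ j, i < j → Addable p j →
    ¬ ((p j : ℤ) - (j : ℤ) ≡ (p i : ℤ) - (i : ℤ) - 1 [ZMOD (l : ℤ)])

/-- the removable node in row `i+1` is co-suitable: its transpose node is a suitable
node of the transpose partition. -/
def CoSuitable (l : ℕ) (p : ℕ → ℕ) (i : ℕ) : Prop :=
  Removable p i ∧ Suitable l (conjP p) (p i - 1)

/-- `Φ_m`: partitions with at most `m` parts and `λ_1 - λ_m ≤ l - m`. -/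
def Phi (l m : ℕ) : Set (ℕ → ℕ) :=
  {p | IsPartition p ∧ plen p ≤ m ∧ p 0 - p (m - 1) ≤ l - m}

/-- `λ` is `m`-distinguished: `λ = λ⁰ + lλ̄` with
`λ⁰ = ((l-m)^k, a_1, …, a_m)`, `l - m > a_1 ≥ … ≥ a_m ≥ 0`, and `λ̄` a partition with
`λ̄_1 ≤ m - 1`. -/
def IsDistinguished (l m : ℕ) (p : ℕ → ℕ) : Prop :=
  ∃ (k : ℕ) (a : ℕ → ℕ) (pb : ℕ → ℕ),
    IsPartition pb ∧ pb 0 < m ∧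
    (∀ i j, i ≤ j → a j ≤ a i) ∧ a 0 < l - m ∧ (∀ i, m ≤ i → a i = 0) ∧
    ∀ i, p i = (if i < k then l - m else a (i - k)) + l * pb i

/-- `q` is obtained from `p` by removing a skew `l`-hook (spanning rows `a+1, …, b+1`,
1-indexed). -/
def IsHookRemoval (l : ℕ) (p q : ℕ → ℕ) : Prop :=
  IsPartition q ∧ ∃ a b : ℕ, a ≤ b ∧
    (∀ i, i < a → q i = p i) ∧
    (∀ i, a ≤ i → i < b → q i + 1 = p (i + 1)) ∧
    q b + l = p a + (b - a) ∧
    ∀ i, b < i → q i = p i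

/-- `q` is the `l`-core of `p`: obtained by repeatedly removing skew `l`-hooks until
none remain. -/
def IsCoreOf (l : ℕ) (p q : ℕ → ℕ) : Prop :=
  Relation.ReflTransGen (fun x y => IsHookRemoval l x y) p q ∧ ∀ r, ¬ IsHookRemoval l q r

/-- the `l`-core of `p`. -/
def lCore (l : ℕ) (p : ℕ → ℕ) : ℕ → ℕ := Classical.epsilon (IsCoreOf l p)

/-!
Write `q = λ'`. By definition `ℓ(Mull(q))` should be the number `mullLen l q`; this presupposes
that every prescribed length is attained, which holds because an `l`-edge can be added to an
`l`-regular partition so as to increase its length by any `0 ≤ d ≤ l`, while removing the `l`-edge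
of `q` lowers `mullLen` by some `0 ≤ d ≤ l`: the starting rows of the `l`-segments of `q` and of the
partition so obtained interlace.

These rows also compute the length: counting empty segments as having `l` rows, the first `T`
segments of `q` occupy `l * T - mullLen l q` rows as soon as they exhaust `q`. Hence a segment with
`h` rows contributes `l - h` to `mullLen`, and the corresponding `h` columns of `λ` form an
`(l - h)`-distinguished summand. Conversely, adding an `m`-distinguished summand to `λ` inserts into
`q` exactly `l - m` parts from a window `[k, k + m]`; then the segments run at least `l - m` rows
ahead after one extra segment, so `mullLen` grows by at most `m`.
-/

section Partitions

variable {p q : ℕ → ℕ}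

theorem IsPartition.antitone (hp : IsPartition p) : Antitone p := fun i j hij => hp.1 i j hij

theorem isPartition_of_antitone (hp : Antitone p) {N : ℕ} (hN : p N = 0) : IsPartition p :=
  ⟨fun _ _ hij => hp hij, N, fun _ hi => Nat.eq_zero_of_le_zero (hN ▸ hp hi)⟩

theorem isPartition_zero : IsPartition 0 :=
  isPartition_of_antitone antitone_const (N := 0) rfl

theorem IsPartition.eq_zero (hp : IsPartition p) (h : p 0 = 0) : p = 0 :=
  funext fun i => Nat.eq_zero_of_le_zero (h ▸ hp.antitone i.zero_le)

theorem plen_le_of_apply_eq_zero {n : ℕ} (h : p n = 0) : plen p ≤ n := Nat.sInf_le h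

theorem IsPartition.apply_plen (hp : IsPartition p) : p (plen p) = 0 :=
  let ⟨N, hN⟩ := hp.2
  Nat.sInf_mem (s := {N | p N = 0}) ⟨N, hN N le_rfl⟩

theorem IsPartition.plen_le_iff (hp : IsPartition p) {n : ℕ} : plen p ≤ n ↔ p n = 0 :=
  ⟨fun h => Nat.eq_zero_of_le_zero (hp.apply_plen ▸ hp.antitone h), plen_le_of_apply_eq_zero⟩

theorem IsPartition.lt_plen_iff (hp : IsPartition p) {n : ℕ} : n < plen p ↔ 0 < p n := by
  rw [← not_le, hp.plen_le_iff, Nat.pos_iff_ne_zero]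

theorem plen_zero : plen 0 = 0 := Nat.eq_zero_of_le_zero (plen_le_of_apply_eq_zero rfl)

theorem IsPartition.comp (hp : IsPartition p) {f : ℕ → ℕ} (hf : Monotone f) (h0 : f 0 = 0) :
    IsPartition fun i => f (p i) :=
  isPartition_of_antitone (fun _ _ hij => hf (hp.antitone hij)) (N := plen p)
    (by rw [hp.apply_plen, h0])

theorem IsPartition.add (hp : IsPartition p) (hq : IsPartition q) : IsPartition (p + q) :=
  isPartition_of_antitone (hp.antitone.add hq.antitone) (N := max (plen p) (plen q)) <| by
    rw [Pi.add_apply, hp.plen_le_iff.mp (le_max_left _ _), hq.plen_le_iff.mp (le_max_right _ _)]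

theorem IsPartition.sum {ι : Type*} {s : Finset ι} {lam : ι → ℕ → ℕ}
    (h : ∀ i ∈ s, IsPartition (lam i)) : IsPartition (∑ i ∈ s, lam i) :=
  Finset.sum_induction _ IsPartition (fun _ _ => IsPartition.add) isPartition_zero h

theorem IsPartition.eq_zero_of_monotone (hp : IsPartition p) (hmono : Monotone p) : p = 0 :=
  hp.eq_zero (Nat.eq_zero_of_le_zero ((hmono (plen p).zero_le).trans_eq hp.apply_plen))

theorem IsPartition.pdeg_eq_sum (hp : IsPartition p) {M : ℕ} (h : plen p ≤ M) :
    pdeg p = ∑ i ∈ Finset.range M, p i :=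
  Finset.sum_subset (Finset.range_mono h) fun _ _ hi =>
    hp.plen_le_iff.mp (not_lt.mp (mt Finset.mem_range.mpr hi))

theorem sum_range_succ_eq_of_forall_eq_succ {g : ℕ} (h : ∀ i < g, p (i + 1) = q i + 1) :
    ∑ i ∈ Finset.range (g + 1), p i = p 0 + ∑ i ∈ Finset.range g, q i + g := by
  rw [Finset.sum_range_succ', Finset.sum_congr rfl fun i hi => h i (Finset.mem_range.mp hi),
    Finset.sum_add_distrib, Finset.sum_const, Finset.card_range, smul_eq_mul, mul_one]
  ring

/-- The partition `(λ_{h+1}, λ_{h+2}, …)` left after dropping the first `h` rows; this is the form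
in which `removeLEdgeAux` passes the remaining rows to its recursive call. -/
def dropRows (p : ℕ → ℕ) (h : ℕ) : ℕ → ℕ := fun j => p (j + h)

theorem dropRows_apply (p : ℕ → ℕ) (h j : ℕ) : dropRows p h j = p (j + h) := rfl

theorem dropRows_dropRows (p : ℕ → ℕ) (a b : ℕ) :
    dropRows (dropRows p a) b = dropRows p (a + b) := by
  funext j
  rw [dropRows_apply, dropRows_apply, dropRows_apply, add_assoc, add_comm b a]

theorem IsPartition.drop (hp : IsPartition p) (h : ℕ) : IsPartition (dropRows p h) :=
  isPartition_of_antitone (fun _ _ hij => hp.antitone (Nat.add_le_add_right hij h)) (N := plen p)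
    (hp.plen_le_iff.mp (Nat.le_add_right _ _))

theorem IsPartition.dropRows_eq_zero (hp : IsPartition p) {h : ℕ} (hh : p h = 0) :
    dropRows p h = 0 :=
  (hp.drop h).eq_zero (by rw [dropRows_apply, zero_add, hh])

theorem IsPartition.plen_dropRows (hp : IsPartition p) (h : ℕ) :
    plen (dropRows p h) = plen p - h :=
  eq_of_forall_lt_iff fun i => by
    rw [(hp.drop h).lt_plen_iff, dropRows_apply, ← hp.lt_plen_iff, Nat.lt_sub_iff_add_lt]

theorem IsPartition.pdeg_eq_sum_add_pdeg_dropRows (hp : IsPartition p) (h : ℕ) :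
    pdeg p = ∑ i ∈ Finset.range h, p i + pdeg (dropRows p h) := by
  rw [hp.pdeg_eq_sum (Nat.le_add_left _ h), Finset.sum_range_add,
    (hp.drop h).pdeg_eq_sum (M := plen p) (by rw [hp.plen_dropRows]; omega)]
  simp only [dropRows_apply, add_comm]

theorem isLRegular_zero (l : ℕ) : IsLRegular l 0 := fun _ hi => absurd rfl hi

theorem IsLRegular.drop {l : ℕ} (hl : 0 < l) (hp : IsLRegular l p) (h : ℕ) :
    IsLRegular l (dropRows p h) := fun i hi => by
  rw [dropRows_apply, show i + l - 1 + h = i + h + l - 1 by omega]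
  exact hp (i + h) hi

end Partitions

section Segments

variable {l : ℕ} {p : ℕ → ℕ}

theorem firstSeg_le_iff (hl : 0 < l) (hp : IsPartition p) {h : ℕ} :
    firstSeg l p ≤ h ↔ l + p h ≤ p 0 + h := by
  constructor
  · intro hle
    obtain ⟨-, hseg⟩ : 1 ≤ firstSeg l p ∧ l ≤ p 0 - p (firstSeg l p) + firstSeg l p :=
      Nat.sInf_mem (s := {h | 1 ≤ h ∧ l ≤ p 0 - p h + h}) ⟨l, hl, Nat.le_add_left _ _⟩
    have := hp.antitone hle
    have := hp.antitone (firstSeg l p).zero_le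
    omega
  · intro hle
    rcases Nat.eq_zero_or_pos h with rfl | hpos
    · omega
    · exact Nat.sInf_le ⟨hpos, by omega⟩

theorem lt_firstSeg_iff (hl : 0 < l) (hp : IsPartition p) {h : ℕ} :
    h < firstSeg l p ↔ p 0 + h < l + p h := by
  rw [← not_le, firstSeg_le_iff hl hp, not_le]

theorem add_apply_firstSeg_le (hl : 0 < l) (hp : IsPartition p) :
    l + p (firstSeg l p) ≤ p 0 + firstSeg l p := (firstSeg_le_iff hl hp).mp le_rfl

theorem firstSeg_pos (hl : 0 < l) (hp : IsPartition p) : 0 < firstSeg l p :=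
  (lt_firstSeg_iff hl hp).mpr (by omega)

theorem firstSeg_le (hl : 0 < l) (hp : IsPartition p) : firstSeg l p ≤ l :=
  (firstSeg_le_iff hl hp).mpr (by have := hp.antitone l.zero_le; omega)

theorem firstSeg_eq_succ (hl : 0 < l) (hp : IsPartition p) {h : ℕ} (hlt : p 0 + h < l + p h)
    (hle : l + p (h + 1) ≤ p 0 + (h + 1)) : firstSeg l p = h + 1 :=
  le_antisymm ((firstSeg_le_iff hl hp).mpr hle) ((lt_firstSeg_iff hl hp).mpr hlt)

theorem firstSeg_zero (hl : 0 < l) : firstSeg l 0 = l := by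
  have := add_apply_firstSeg_le hl isPartition_zero
  have := firstSeg_le hl isPartition_zero
  simp only [Pi.zero_apply] at *
  omega

theorem add_firstSeg_le (hl : 0 < l) (hp : IsPartition p) :
    p 0 + firstSeg l p ≤ l + p (firstSeg l p - 1) := by
  have hpos := firstSeg_pos hl hp
  have := (lt_firstSeg_iff hl hp).mp (Nat.sub_one_lt_of_lt hpos)
  omega

theorem IsLRegular.firstSeg_lt (hl : 0 < l) (hp : IsPartition p) (hreg : IsLRegular l p)
    (h0 : p 0 ≠ 0) : firstSeg l p < l := by
  have hne := hreg 0 h0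
  rw [zero_add] at hne
  have := hp.antitone (l - 1).zero_le
  have := (firstSeg_le_iff hl hp (h := l - 1)).mpr (by omega)
  omega

theorem IsPartition.segment_induction (hl : 0 < l) {motive : (p : ℕ → ℕ) → IsPartition p → Prop}
    (zero : motive 0 isPartition_zero)
    (step : ∀ p (hp : IsPartition p),
      motive (dropRows p (firstSeg l p)) (hp.drop _) → motive p hp)
    {p : ℕ → ℕ} (hp : IsPartition p) : motive p hp := by
  induction hn : plen p using Nat.strong_induction_on generalizing p with
  | _ n ih =>
    rcases Nat.eq_zero_or_pos (p 0) with h0 | h0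
    · obtain rfl := hp.eq_zero h0
      exact zero
    · have := firstSeg_pos hl hp
      have := hp.lt_plen_iff.mpr h0
      exact step p hp (ih _ (by rw [hp.plen_dropRows]; omega) _ rfl)

/-- The row in which the segment following one that starts in row `b` starts. -/
def nextRow (l : ℕ) (q : ℕ → ℕ) (b : ℕ) : ℕ := b + firstSeg l (dropRows q b)

theorem nextRow_le_iff (hl : 0 < l) (hp : IsPartition p) {b j : ℕ} :
    nextRow l p b ≤ j ↔ l + p j + b ≤ p b + j := by
  have hpos := firstSeg_pos hl (hp.drop b)
  rcases le_total b j with hbj | hjb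
  · obtain ⟨h, rfl⟩ := Nat.exists_eq_add_of_le' hbj
    have := firstSeg_le_iff hl (hp.drop b) (h := h)
    rw [dropRows_apply, dropRows_apply, zero_add] at this
    unfold nextRow
    omega
  · have := hp.antitone hjb
    unfold nextRow
    omega

theorem add_apply_nextRow_le (hl : 0 < l) (hp : IsPartition p) (b : ℕ) :
    l + p (nextRow l p b) + b ≤ p b + nextRow l p b := (nextRow_le_iff hl hp).mp le_rfl

theorem lt_nextRow (hl : 0 < l) (hp : IsPartition p) (b : ℕ) : b < nextRow l p b :=
  Nat.lt_add_of_pos_right (firstSeg_pos hl (hp.drop b))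

theorem nextRow_le_add (hl : 0 < l) (hp : IsPartition p) (b : ℕ) : nextRow l p b ≤ b + l :=
  Nat.add_le_add_left (firstSeg_le hl (hp.drop b)) b

theorem nextRow_mono (hl : 0 < l) (hp : IsPartition p) : Monotone (nextRow l p) := fun b c hbc => by
  have := add_apply_nextRow_le hl hp c
  have := hp.antitone hbc
  exact (nextRow_le_iff hl hp).mpr (by omega)

theorem nextRow_of_apply_eq_zero (hl : 0 < l) (hp : IsPartition p) {b : ℕ} (h : p b = 0) :
    nextRow l p b = b + l := by
  rw [nextRow, hp.dropRows_eq_zero h, firstSeg_zero hl]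

/-- The row in which the `(T+1)`-st `l`-segment starts (rows and segments are counted from `0`).
Once the rows are exhausted, the empty segments still advance by `l`. -/
def segStart (l : ℕ) (q : ℕ → ℕ) : ℕ → ℕ
  | 0 => 0
  | T + 1 => nextRow l q (segStart l q T)

theorem segStart_succ (l : ℕ) (q : ℕ → ℕ) (T : ℕ) :
    segStart l q (T + 1) = nextRow l q (segStart l q T) := rfl

theorem le_segStart (hl : 0 < l) (hp : IsPartition p) (T : ℕ) : T ≤ segStart l p T := by
  induction T with
  | zero => exact Nat.zero_le _
  | succ T ih => exact Nat.succ_le_of_lt (ih.trans_lt (lt_nextRow hl hp _))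

theorem apply_segStart_eq_zero (hl : 0 < l) (hp : IsPartition p) {T : ℕ} (hT : plen p ≤ T) :
    p (segStart l p T) = 0 :=
  hp.plen_le_iff.mp (hT.trans (le_segStart hl hp T))

end Segments

section RemoveLEdge

variable {l : ℕ} {p : ℕ → ℕ}

theorem removeLEdgeAux_zero (l n : ℕ) : removeLEdgeAux l n 0 = 0 := by
  cases n <;> simp [removeLEdgeAux] <;> rfl

theorem removeLEdge_zero (l : ℕ) : removeLEdge l 0 = 0 := removeLEdgeAux_zero l _

theorem removeLEdgeAux_succ (l n : ℕ) (p : ℕ → ℕ) : removeLEdgeAux l (n + 1) p =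
    if p 0 = 0 then fun _ => 0
    else if p 0 + plen p - 1 ≤ l then fun i => p (i + 1) - 1
    else fun i =>
      if i + 1 < firstSeg l p then p (i + 1) - 1
      else if i + 1 = firstSeg l p then p 0 + firstSeg l p - 1 - l
      else removeLEdgeAux l n (dropRows p (firstSeg l p)) (i - firstSeg l p) := rfl

theorem removeLEdgeAux_eq_of_plen_le (hl : 0 < l) (hp : IsPartition p) {m n : ℕ} (hm : plen p ≤ m)
    (hn : plen p ≤ n) : removeLEdgeAux l m p = removeLEdgeAux l n p := by
  induction m generalizing p n with
  | zero => rw [hp.eq_zero (hp.plen_le_iff.mp hm), removeLEdgeAux_zero, removeLEdgeAux_zero]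
  | succ m ih =>
    rcases Nat.eq_zero_or_pos (p 0) with h0 | h0
    · rw [hp.eq_zero h0, removeLEdgeAux_zero, removeLEdgeAux_zero]
    · obtain ⟨n, rfl⟩ := Nat.exists_eq_add_of_lt ((hp.lt_plen_iff.mpr h0).trans_le hn)
      have hpos := firstSeg_pos hl hp
      have hlen := hp.plen_dropRows (firstSeg l p)
      rw [removeLEdgeAux_succ, removeLEdgeAux_succ,
        ih (hp.drop (firstSeg l p)) (n := 0 + n) (by omega) (by omega)]

theorem removeLEdge_of_edge_le (hp : IsPartition p) (h0 : p 0 ≠ 0) (hle : p 0 + plen p - 1 ≤ l)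
    (i : ℕ) : removeLEdge l p i = p (i + 1) - 1 := by
  obtain ⟨n, hn⟩ := Nat.exists_eq_add_of_lt (hp.lt_plen_iff.mpr (Nat.pos_of_ne_zero h0))
  rw [removeLEdge, hn, zero_add, removeLEdgeAux_succ, if_neg h0, if_pos hle]

theorem removeLEdge_of_lt_edge (hl : 0 < l) (hp : IsPartition p) (hlt : l < p 0 + plen p - 1)
    (i : ℕ) : removeLEdge l p i =
      if i + 1 < firstSeg l p then p (i + 1) - 1
      else if i + 1 = firstSeg l p then p 0 + firstSeg l p - 1 - l
      else removeLEdge l (dropRows p (firstSeg l p)) (i - firstSeg l p) := by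
  have h0 : p 0 ≠ 0 := fun h0 => by
    have := hp.plen_le_iff.mpr h0
    omega
  obtain ⟨n, hn⟩ := Nat.exists_eq_add_of_lt (hp.lt_plen_iff.mpr (Nat.pos_of_ne_zero h0))
  have hpos := firstSeg_pos hl hp
  have hlen := hp.plen_dropRows (firstSeg l p)
  rw [removeLEdge, hn, zero_add, removeLEdgeAux_succ, if_neg h0, if_neg hlt.not_ge, removeLEdge,
    removeLEdgeAux_eq_of_plen_le hl (hp.drop _) (n := n) le_rfl (by omega)]

theorem removeLEdge_apply (hl : 0 < l) (hp : IsPartition p) (i : ℕ) :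
    removeLEdge l p i =
      if i < firstSeg l p then max (p (i + 1) - 1) (p 0 + i - l)
      else removeLEdge l (dropRows p (firstSeg l p)) (i - firstSeg l p) := by
  rcases Nat.eq_zero_or_pos (p 0) with h0 | h0
  · obtain rfl := hp.eq_zero h0
    rw [hp.dropRows_eq_zero rfl, removeLEdge_zero, firstSeg_zero hl]
    split <;> simp only [Pi.zero_apply]
    omega
  have hi := lt_firstSeg_iff hl hp (h := i)
  have hi' := lt_firstSeg_iff hl hp (h := i + 1)
  rcases le_or_gt (p 0 + plen p - 1) l with hle | hlt
  · rw [removeLEdge_of_edge_le hp h0.ne' hle]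
    have hlen := hp.lt_plen_iff (n := i)
    split_ifs with hif
    · omega
    · have hend : p (firstSeg l p) = 0 := by
        have := add_apply_firstSeg_le hl hp
        have := hp.lt_plen_iff (n := firstSeg l p)
        omega
      have := hp.antitone (show firstSeg l p ≤ i + 1 by omega)
      rw [hp.dropRows_eq_zero hend, removeLEdge_zero, Pi.zero_apply]
      omega
  · rw [removeLEdge_of_lt_edge hl hp hlt]
    split_ifs <;> omega

theorem removeLEdge_of_lt_firstSeg (hl : 0 < l) (hp : IsPartition p) {i : ℕ}
    (hi : i < firstSeg l p) : removeLEdge l p i = max (p (i + 1) - 1) (p 0 + i - l) := by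
  rw [removeLEdge_apply hl hp, if_pos hi]

theorem removeLEdge_firstSeg_sub_one (hl : 0 < l) (hp : IsPartition p) :
    removeLEdge l p (firstSeg l p - 1) = p 0 + firstSeg l p - 1 - l := by
  have hpos := firstSeg_pos hl hp
  have := add_apply_firstSeg_le hl hp
  rw [removeLEdge_of_lt_firstSeg hl hp (by omega), Nat.sub_add_cancel hpos]
  omega

theorem dropRows_removeLEdge_firstSeg (hl : 0 < l) (hp : IsPartition p) :
    dropRows (removeLEdge l p) (firstSeg l p) = removeLEdge l (dropRows p (firstSeg l p)) := by
  funext i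
  rw [dropRows_apply, removeLEdge_apply hl hp, if_neg (by omega), Nat.add_sub_cancel]

/-- The row `b` is the first row of the segment through row `i`. -/
theorem exists_removeLEdge_eq_max (hl : 0 < l) (hp : IsPartition p) (i : ℕ) :
    ∃ b ≤ i, p b + i < l + p i + b ∧
      removeLEdge l p i = max (p (i + 1) - 1) (p b + i - (l + b)) := by
  induction hp using IsPartition.segment_induction hl generalizing i with
  | zero => exact ⟨i, le_rfl, by simpa using hl, by simp [removeLEdge_zero, hl.le]⟩
  | step p hp ih =>
    rcases lt_or_ge i (firstSeg l p) with hi | hi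
    · exact ⟨0, i.zero_le, (lt_firstSeg_iff hl hp).mp hi, removeLEdge_of_lt_firstSeg hl hp hi⟩
    · obtain ⟨j, rfl⟩ := Nat.exists_eq_add_of_le' hi
      obtain ⟨b, hbj, hlt, heq⟩ := ih j
      simp only [← dropRows_removeLEdge_firstSeg hl hp, dropRows_apply] at hlt heq
      refine ⟨b + firstSeg l p, by omega, by omega, ?_⟩
      rw [heq, show j + 1 + firstSeg l p = j + firstSeg l p + 1 by omega]
      congr 1
      omega

theorem apply_succ_le_removeLEdge_add_one (hl : 0 < l) (hp : IsPartition p) (i : ℕ) :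
    p (i + 1) ≤ removeLEdge l p i + 1 := by
  obtain ⟨b, -, -, heq⟩ := exists_removeLEdge_eq_max hl hp i
  omega

theorem removeLEdge_le_sub_one (hl : 0 < l) (hp : IsPartition p) (i : ℕ) :
    removeLEdge l p i ≤ p i - 1 := by
  obtain ⟨b, -, hlt, heq⟩ := exists_removeLEdge_eq_max hl hp i
  have := hp.antitone (show i ≤ i + 1 by omega)
  omega

theorem IsPartition.removeLEdge (hl : 0 < l) (hp : IsPartition p) :
    IsPartition (removeLEdge l p) :=
  isPartition_of_antitone (N := plen p)
    (antitone_nat_of_succ_le fun i => by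
      have := apply_succ_le_removeLEdge_add_one hl hp i
      have := removeLEdge_le_sub_one hl hp (i + 1)
      omega)
    (by
      have := removeLEdge_le_sub_one hl hp (plen p)
      have := hp.apply_plen
      omega)

theorem IsLRegular.removeLEdge (hl : 0 < l) (hp : IsPartition p) (hreg : IsLRegular l p) :
    IsLRegular l (removeLEdge l p) := fun i hi heq => by
  obtain ⟨b, hb, -, hmax⟩ := exists_removeLEdge_eq_max hl hp (i + l - 1)
  have hupper := removeLEdge_le_sub_one hl hp (i + l - 1)
  have hlower := apply_succ_le_removeLEdge_add_one hl hp i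
  have hreg0 := hreg i
  have hreg1 := hreg (i + 1)
  rw [show i + 1 + l - 1 = i + l - 1 + 1 by omega] at hreg1
  have := hp.antitone (show i ≤ i + l - 1 by omega)
  have := hp.antitone (show i + 1 ≤ i + l - 1 + 1 by omega)
  have := hp.antitone (show i + l - 1 ≤ i + l - 1 + 1 by omega)
  rcases le_or_gt b i with hbi | hib
  · have := hp.antitone hbi
    omega
  · have := hp.antitone (show i + 1 ≤ b from hib)
    omega

end RemoveLEdge
section MullLen

variable {l : ℕ} {p : ℕ → ℕ}

theorem pdeg_removeLEdge_add_plen_le (hl : 0 < l) (hp : IsPartition p) :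
    pdeg (removeLEdge l p) + plen p ≤ pdeg p := by
  have hlen : plen (removeLEdge l p) ≤ plen p := plen_le_of_apply_eq_zero <|
    Nat.eq_zero_of_le_zero <| by
      simpa only [hp.apply_plen] using removeLEdge_le_sub_one hl hp (plen p)
  calc pdeg (removeLEdge l p) + plen p
      = ∑ i ∈ Finset.range (plen p), (removeLEdge l p i + 1) := by
        rw [(hp.removeLEdge hl).pdeg_eq_sum hlen, Finset.sum_add_distrib, Finset.sum_const,
          Finset.card_range, smul_eq_mul, mul_one]
    _ ≤ pdeg p := Finset.sum_le_sum fun i hi => by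
        have := hp.lt_plen_iff.mp (Finset.mem_range.mp hi)
        have := removeLEdge_le_sub_one hl hp i
        omega

theorem elen_add_pdeg_removeLEdge (hl : 0 < l) (hp : IsPartition p) :
    elen l p + pdeg (removeLEdge l p) = pdeg p :=
  Nat.sub_add_cancel ((Nat.le_add_right _ _).trans (pdeg_removeLEdge_add_plen_le hl hp))

theorem plen_le_elen (hl : 0 < l) (hp : IsPartition p) : plen p ≤ elen l p :=
  Nat.le_sub_of_add_le' (pdeg_removeLEdge_add_plen_le hl hp)

theorem mullLen_zero (l : ℕ) : mullLen l 0 = 0 := by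
  have helen : elen l 0 = 0 := by
    rw [elen, removeLEdge_zero, Nat.sub_self]
  rw [mullLen, helen, plen_zero, if_pos (dvd_zero l)]

theorem elen_eq_of_add_firstSeg_eq (hl : 0 < l) (hp : IsPartition p) (h0 : p 0 ≠ 0)
    (hsmall : p 0 + firstSeg l p = l) : elen l p + 1 = p 0 + plen p := by
  have hlen : plen p ≤ firstSeg l p := hp.plen_le_iff.mpr <| by
    have := add_apply_firstSeg_le hl hp
    omega
  have hrem := removeLEdge_of_edge_le (l := l) hp h0 (by omega)
  obtain ⟨g, hg⟩ : ∃ g, plen p = g + 1 :=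
    Nat.exists_eq_succ_of_ne_zero (hp.lt_plen_iff.mpr (Nat.pos_of_ne_zero h0)).ne'
  have hremlen : plen (removeLEdge l p) ≤ g := plen_le_of_apply_eq_zero <| by
    rw [hrem, ← hg, hp.apply_plen]
  have hsum : pdeg p = p 0 + pdeg (removeLEdge l p) + g := by
    rw [(hp.removeLEdge hl).pdeg_eq_sum hremlen, hp.pdeg_eq_sum hg.le]
    refine sum_range_succ_eq_of_forall_eq_succ fun i hi => ?_
    have := hp.lt_plen_iff (n := i + 1)
    rw [hrem]
    omega
  have := elen_add_pdeg_removeLEdge hl hp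
  omega

theorem apply_firstSeg_sub_one_pos (hl : 0 < l) (hp : IsPartition p)
    (hlarge : l < p 0 + firstSeg l p) : 0 < p (firstSeg l p - 1) := by
  have := add_firstSeg_le hl hp
  omega

theorem elen_eq_add_elen_dropRows (hl : 0 < l) (hp : IsPartition p)
    (hlarge : l < p 0 + firstSeg l p) :
    elen l p = l + elen l (dropRows p (firstSeg l p)) := by
  have hlast := apply_firstSeg_sub_one_pos hl hp hlarge
  obtain ⟨g, hg⟩ : ∃ g, firstSeg l p = g + 1 :=
    Nat.exists_eq_succ_of_ne_zero (firstSeg_pos hl hp).ne'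
  have hfirst : ∑ i ∈ Finset.range (g + 1), p i =
      ∑ i ∈ Finset.range (g + 1), removeLEdge l p i + l := by
    have hremg := removeLEdge_firstSeg_sub_one hl hp
    rw [hg, Nat.add_sub_cancel] at hremg
    rw [sum_range_succ_eq_of_forall_eq_succ (q := removeLEdge l p), Finset.sum_range_succ, hremg]
    · omega
    · intro i hi
      rw [removeLEdge_of_lt_firstSeg hl hp (by omega)]
      have := (lt_firstSeg_iff hl hp (h := i + 1)).mp (by omega)
      have := hp.antitone (show i + 1 ≤ firstSeg l p - 1 by omega)
      omega
  have hsum := hp.pdeg_eq_sum_add_pdeg_dropRows (g + 1)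
  have hsum' := (hp.removeLEdge hl).pdeg_eq_sum_add_pdeg_dropRows (g + 1)
  rw [← hg] at hsum hsum' hfirst
  rw [dropRows_removeLEdge_firstSeg hl hp] at hsum'
  have := elen_add_pdeg_removeLEdge hl hp
  have := elen_add_pdeg_removeLEdge hl (hp.drop (firstSeg l p))
  omega

theorem mullLen_add_firstSeg (hl : 0 < l) (hp : IsPartition p) :
    mullLen l p + firstSeg l p = l + mullLen l (dropRows p (firstSeg l p)) := by
  have hend := add_apply_firstSeg_le hl hp
  rcases Nat.eq_zero_or_pos (p 0) with h0 | h0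
  · rw [hp.dropRows_eq_zero (by have := hp.antitone (firstSeg l p).zero_le; omega),
      hp.eq_zero h0, firstSeg_zero hl, add_comm]
  rcases (Nat.le_of_add_right_le hend).eq_or_lt with hsmall | hlarge
  · have helen := elen_eq_of_add_firstSeg_eq hl hp h0.ne' hsmall.symm
    have hlen : plen p ≤ firstSeg l p := hp.plen_le_iff.mpr (by omega)
    have hlpos := hp.lt_plen_iff.mpr h0
    have hndvd : ¬ l ∣ elen l p := Nat.not_dvd_of_pos_of_lt (by omega) (by omega)
    rw [hp.dropRows_eq_zero (by omega), mullLen_zero, mullLen, if_neg hndvd]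
    omega
  · have helen := elen_eq_add_elen_dropRows hl hp hlarge
    have := plen_le_elen hl hp
    have hfirst := hp.lt_plen_iff.mpr (apply_firstSeg_sub_one_pos hl hp hlarge)
    have hlen := plen_le_elen hl (hp.drop (firstSeg l p))
    have hdvd : l ∣ elen l p ↔ l ∣ elen l (dropRows p (firstSeg l p)) := by
      rw [helen, Nat.dvd_add_right dvd_rfl]
    rw [mullLen, mullLen, if_congr hdvd rfl rfl]
    rw [hp.plen_dropRows] at hlen ⊢
    split_ifs <;> omega

theorem mullLen_add_segStart (hl : 0 < l) (hp : IsPartition p) (T : ℕ) :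
    mullLen l p + segStart l p T = l * T + mullLen l (dropRows p (segStart l p T)) := by
  induction T with
  | zero => rw [segStart, mul_zero, zero_add, add_zero]; rfl
  | succ T ih =>
    have := mullLen_add_firstSeg hl (hp.drop (segStart l p T))
    rw [dropRows_dropRows] at this
    rw [segStart_succ, nextRow, mul_add_one]
    omega

theorem mullLen_add_segStart_of_apply_eq_zero (hl : 0 < l) (hp : IsPartition p) {T : ℕ}
    (hT : p (segStart l p T) = 0) : mullLen l p + segStart l p T = l * T := by
  rw [mullLen_add_segStart hl hp, hp.dropRows_eq_zero hT, mullLen_zero, add_zero]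

end MullLen

section Interlacing

variable {l : ℕ} {p : ℕ → ℕ}

theorem firstSeg_le_firstSeg_removeLEdge (hl : 0 < l) (hp : IsPartition p) :
    firstSeg l p ≤ firstSeg l (removeLEdge l p) := by
  refine Nat.le_of_pred_lt ((lt_firstSeg_iff hl (hp.removeLEdge hl)).mpr ?_)
  have := removeLEdge_le_sub_one hl hp 0
  have := firstSeg_pos hl hp
  have := firstSeg_le hl hp
  rw [Nat.pred_eq_sub_one, removeLEdge_firstSeg_sub_one hl hp]
  omega

theorem dropRows_removeLEdge_segStart (hl : 0 < l) (hp : IsPartition p) (T : ℕ) :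
    dropRows (removeLEdge l p) (segStart l p T) = removeLEdge l (dropRows p (segStart l p T)) := by
  induction T with
  | zero => rfl
  | succ T ih =>
    rw [segStart_succ, nextRow, ← dropRows_dropRows, ih,
      dropRows_removeLEdge_firstSeg hl (hp.drop _), dropRows_dropRows]

theorem removeLEdge_segStart_succ_sub_one (hl : 0 < l) (hp : IsPartition p) (T : ℕ) :
    removeLEdge l p (segStart l p (T + 1) - 1) =
      p (segStart l p T) + segStart l p (T + 1) - (l + segStart l p T + 1) := by
  have hpos := firstSeg_pos hl (hp.drop (segStart l p T))
  have hend := removeLEdge_firstSeg_sub_one hl (hp.drop (segStart l p T))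
  rw [← dropRows_removeLEdge_segStart hl hp, dropRows_apply, dropRows_apply, zero_add] at hend
  rw [segStart_succ, nextRow, show segStart l p T + firstSeg l (dropRows p (segStart l p T)) - 1 =
    firstSeg l (dropRows p (segStart l p T)) - 1 + segStart l p T by omega, hend]
  omega

theorem segStart_le_segStart_removeLEdge (hl : 0 < l) (hp : IsPartition p) (T : ℕ) :
    segStart l p T ≤ segStart l (removeLEdge l p) T := by
  induction T with
  | zero => exact le_rfl
  | succ T ih =>
    calc nextRow l p (segStart l p T)
        ≤ nextRow l (removeLEdge l p) (segStart l p T) := by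
          rw [nextRow, nextRow, dropRows_removeLEdge_segStart hl hp]
          exact Nat.add_le_add_left (firstSeg_le_firstSeg_removeLEdge hl (hp.drop _)) _
      _ ≤ nextRow l (removeLEdge l p) (segStart l (removeLEdge l p) T) :=
          nextRow_mono hl (hp.removeLEdge hl) ih

theorem segStart_removeLEdge_le_segStart_succ (hl : 0 < l) (hp : IsPartition p) (T : ℕ) :
    segStart l (removeLEdge l p) T ≤ segStart l p (T + 1) ∧
      (p (segStart l p (T + 1)) ≠ 0 →
        segStart l (removeLEdge l p) T < segStart l p (T + 1)) := by
  have hr := hp.removeLEdge hl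
  induction T with
  | zero => exact ⟨Nat.zero_le _, fun _ => lt_nextRow hl hp _⟩
  | succ T ih =>
    have hend := removeLEdge_segStart_succ_sub_one hl hp (T + 1)
    rw [segStart_succ l p (T + 1)] at hend ⊢
    rw [segStart_succ l (removeLEdge l p) T]
    set b := segStart l p (T + 1)
    set c := segStart l (removeLEdge l p) T
    have hseg := add_apply_nextRow_le hl hp b
    have hb := lt_nextRow hl hp b
    rcases eq_or_ne (p b) 0 with hz | hnz
    · have := nextRow_le_add hl hr c
      have := nextRow_of_apply_eq_zero hl hp hz
      have := hp.antitone hb.le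
      omega
    · have hcb := ih.2 hnz
      have := hr.antitone (Nat.le_sub_one_of_lt hcb)
      have hlower := apply_succ_le_removeLEdge_add_one hl hp (b - 1)
      rw [Nat.sub_add_cancel (by omega)] at hlower
      rcases eq_or_ne (p (nextRow l p b)) 0 with hz | hnz
      · have := removeLEdge_le_sub_one hl hp (nextRow l p b)
        exact ⟨(nextRow_le_iff hl hr).mpr (by omega), fun h => absurd hz h⟩
      · have := (nextRow_le_iff hl hr (b := c) (j := nextRow l p b - 1)).mpr (by omega)
        omega

theorem mullLen_removeLEdge_le (hl : 0 < l) (hp : IsPartition p) :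
    mullLen l (removeLEdge l p) ≤ mullLen l p ∧
      mullLen l p ≤ mullLen l (removeLEdge l p) + l := by
  have hend := apply_segStart_eq_zero hl hp le_rfl
  have hinter := segStart_le_segStart_removeLEdge hl hp (plen p)
  have hrend : removeLEdge l p (segStart l (removeLEdge l p) (plen p)) = 0 := by
    have := removeLEdge_le_sub_one hl hp (segStart l (removeLEdge l p) (plen p))
    have := hp.antitone hinter
    omega
  have := mullLen_add_segStart_of_apply_eq_zero hl hp hend
  have := mullLen_add_segStart_of_apply_eq_zero hl (hp.removeLEdge hl) hrend
  have := (segStart_removeLEdge_le_segStart_succ hl hp (plen p)).1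
  have hnext := nextRow_of_apply_eq_zero hl hp hend
  rw [← segStart_succ] at hnext
  omega

end Interlacing

section AddEdge

variable {l : ℕ} {μ : ℕ → ℕ}

/-- The sequence `(a, μ_1, μ_2, …)`. -/
def consPart (a : ℕ) (μ : ℕ → ℕ) : ℕ → ℕ
  | 0 => a
  | i + 1 => μ i

theorem consPart_zero (a : ℕ) (μ : ℕ → ℕ) : consPart a μ 0 = a := rfl

theorem consPart_succ (a : ℕ) (μ : ℕ → ℕ) (i : ℕ) : consPart a μ (i + 1) = μ i := rfl

theorem dropRows_consPart_succ (a : ℕ) (μ : ℕ → ℕ) (h : ℕ) :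
    dropRows (consPart a μ) (h + 1) = dropRows μ h := rfl

theorem consPart_dropRows_one (μ : ℕ → ℕ) : consPart (μ 0) (dropRows μ 1) = μ := by
  funext i
  cases i <;> rfl

theorem IsPartition.cons {a : ℕ} (hμ : IsPartition μ) (ha : μ 0 ≤ a) : IsPartition (consPart a μ) :=
  isPartition_of_antitone (N := plen μ + 1)
    (antitone_nat_of_succ_le fun i => match i with
      | 0 => ha
      | i + 1 => hμ.antitone i.le_succ)
    hμ.apply_plen

theorem IsPartition.plen_consPart {a : ℕ} (hμ : IsPartition μ) (ha : μ 0 ≤ a) (ha0 : a ≠ 0) :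
    plen (consPart a μ) = plen μ + 1 :=
  eq_of_forall_lt_iff fun i => by
    rw [(hμ.cons ha).lt_plen_iff]
    cases i with
    | zero => simp only [consPart_zero, Nat.pos_of_ne_zero ha0, Nat.succ_pos]
    | succ i => rw [consPart_succ, ← hμ.lt_plen_iff, Nat.add_lt_add_iff_right]

theorem IsLRegular.cons {a : ℕ} (hl : 2 ≤ l) (hμ : IsLRegular l μ) (ha : μ (l - 2) ≠ a) :
    IsLRegular l (consPart a μ) := fun i hi => by
  cases i with
  | zero => rwa [consPart_zero, show 0 + l - 1 = l - 2 + 1 by omega, consPart_succ]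
  | succ i =>
    rw [consPart_succ, show i + 1 + l - 1 = i + l - 1 + 1 by omega, consPart_succ]
    exact hμ i hi

theorem removeLEdge_consPart_add (hl : 0 < l) (hμ : IsPartition μ) {a : ℕ} (ha : μ 0 ≤ a + 1) :
    removeLEdge l (consPart (a + l) μ) = consPart a (removeLEdge l μ) := by
  have hcons : IsPartition (consPart (a + l) μ) := hμ.cons (by omega)
  have hseg : firstSeg l (consPart (a + l) μ) = 1 :=
    firstSeg_eq_succ hl hcons (h := 0) (by omega) <| by
      simp only [consPart_zero, consPart_succ]
      omega
  funext i
  rw [removeLEdge_apply hl hcons, hseg]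
  cases i with
  | zero =>
    rw [if_pos one_pos]
    simp only [consPart_zero, consPart_succ]
    omega
  | succ i => rw [if_neg (by omega), consPart_succ, Nat.add_sub_cancel]; rfl

theorem isPartition_consPart_consPart (hl : 0 < l) (hμ : IsPartition μ) {a : ℕ}
    (ha : a + 2 ≤ μ 0) (hrem : removeLEdge l μ 0 ≤ a) :
    IsPartition (consPart (μ 0 - 1) (consPart (a + 1) (dropRows μ 1))) := by
  have := apply_succ_le_removeLEdge_add_one hl hμ 0
  exact ((hμ.drop 1).cons (by rw [dropRows_apply]; omega)).cons (by rw [consPart_zero]; omega)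

/-- The first segment of the enlarged partition is that of `μ`, pushed down by one row. -/
theorem removeLEdge_consPart_consPart (hl : 0 < l) (hμ : IsPartition μ) {a : ℕ} (ha : a + 2 ≤ μ 0)
    (hrem : removeLEdge l μ 0 ≤ a) :
    removeLEdge l (consPart (μ 0 - 1) (consPart (a + 1) (dropRows μ 1))) =
      consPart a (removeLEdge l μ) := by
  have hpos := firstSeg_pos hl hμ
  have hrem0 := removeLEdge_of_lt_firstSeg hl hμ hpos
  have hcons := isPartition_consPart_consPart hl hμ ha hrem
  have hseg : firstSeg l (consPart (μ 0 - 1) (consPart (a + 1) (dropRows μ 1))) =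
      firstSeg l μ + 1 := by
    have hstart := add_firstSeg_le hl hμ
    have hend := add_apply_firstSeg_le hl hμ
    obtain ⟨g, hg⟩ := Nat.exists_eq_add_of_lt hpos
    rw [zero_add] at hg
    rw [hg] at hstart hend ⊢
    refine firstSeg_eq_succ hl hcons ?_ ?_
    · cases g <;>
        simp only [consPart_zero, consPart_succ, dropRows_apply, Nat.add_sub_cancel] at * <;> omega
    · simp only [consPart_zero, consPart_succ, dropRows_apply]
      omega
  funext i
  rw [removeLEdge_apply hl hcons, hseg]
  cases i with
  | zero =>
    rw [if_pos (Nat.succ_pos _)]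
    simp only [consPart_zero, consPart_succ]
    omega
  | succ i =>
    rw [consPart_succ a, removeLEdge_apply hl hμ, dropRows_consPart_succ, Nat.add_sub_add_right]
    simp only [Nat.add_lt_add_iff_right]
    obtain ⟨g, hg⟩ := Nat.exists_eq_add_of_lt hpos
    rw [hg]
    congr 1
    simp only [consPart_zero, consPart_succ, dropRows_apply]
    omega

theorem exists_removeLEdge_eq_zero (hl : 2 ≤ l) {d : ℕ} (hd : d ≤ l) :
    ∃ μ, IsPartition μ ∧ IsLRegular l μ ∧ removeLEdge l μ = 0 ∧ plen μ = d := by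
  rcases d with _ | d
  · exact ⟨0, isPartition_zero, isLRegular_zero l, removeLEdge_zero l, plen_zero⟩
  let ones : ℕ → ℕ := fun i => if i < d then 1 else 0
  have hones_apply (i : ℕ) : ones i = if i < d then 1 else 0 := rfl
  have hones : IsPartition ones := isPartition_of_antitone (N := d)
    (antitone_nat_of_succ_le fun i => by simp only [hones_apply]; split_ifs <;> omega)
    (if_neg (lt_irrefl d))
  have hones_len : plen ones = d := eq_of_forall_lt_iff fun i => by
    rw [hones.lt_plen_iff, hones_apply]
    split_ifs <;> omega
  have hones_le (i : ℕ) : ones i < 2 := by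
    rw [hones_apply]
    split_ifs <;> omega
  have hones_reg : IsLRegular l ones := fun i => by
    simp only [hones_apply]
    split_ifs <;> omega
  have hcons := hones.cons (hones_le 0).le
  refine ⟨consPart 2 ones, hcons, hones_reg.cons hl (hones_le _).ne, ?_, ?_⟩
  · refine (hcons.removeLEdge (by omega)).eq_zero ?_
    have := hones_le 0
    rw [removeLEdge_of_lt_firstSeg (by omega) hcons (firstSeg_pos (by omega) hcons), consPart_zero,
      consPart_succ]
    omega
  · rw [hones.plen_consPart (hones_le 0).le two_ne_zero, hones_len]

theorem isLRegular_consPart_consPart (hl : 2 ≤ l) (hμ : IsPartition μ) (hμreg : IsLRegular l μ)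
    {a : ℕ} (ha : a + 2 ≤ μ 0) (hreg : IsLRegular l (consPart a (removeLEdge l μ))) (ha0 : a ≠ 0)
    (hrem : removeLEdge l μ 0 ≤ a) :
    IsLRegular l (consPart (μ 0 - 1) (consPart (a + 1) (dropRows μ 1))) := by
  have hl0 : 0 < l := by omega
  have hlt : removeLEdge l μ (l - 2) < a := by
    refine lt_of_le_of_ne (((hμ.removeLEdge hl0).antitone (Nat.zero_le _)).trans hrem) ?_
    have := hreg 0 ha0
    rwa [show 0 + l - 1 = l - 2 + 1 by omega] at this
  refine ((hμreg.drop hl0 1).cons hl ?_).cons hl fun heq => ?_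
  · have := apply_succ_le_removeLEdge_add_one hl0 hμ (l - 2)
    rw [dropRows_apply]
    omega
  · have hsecond : consPart (a + 1) (dropRows μ 1) (l - 2) ≤ a + 1 :=
      (isPartition_consPart_consPart hl0 hμ ha hrem).antitone (show 1 ≤ l - 2 + 1 by omega)
    have hseg : l - 2 < firstSeg l μ := by
      rw [lt_firstSeg_iff hl0 hμ]
      rcases hl.eq_or_lt with rfl | hlt
      · rw [Nat.sub_self]
        omega
      · rw [show l - 2 = l - 3 + 1 by omega, consPart_succ, dropRows_apply,
          show l - 3 + 1 = l - 2 by omega] at heq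
        omega
    have := removeLEdge_of_lt_firstSeg hl0 hμ hseg
    omega

theorem exists_removeLEdge_eq_consPart (hl : 2 ≤ l) {ν : ℕ → ℕ} (hν : IsPartition ν)
    (hνreg : IsLRegular l ν) (h0 : ν 0 ≠ 0) (hμ : IsPartition μ) (hμreg : IsLRegular l μ)
    (hrem : removeLEdge l μ = dropRows ν 1) :
    ∃ μ', IsPartition μ' ∧ IsLRegular l μ' ∧ removeLEdge l μ' = ν ∧ plen μ' = plen μ + 1 := by
  have hl0 : 0 < l := by omega
  have hν1 : consPart (ν 0) (removeLEdge l μ) = ν := by rw [hrem, consPart_dropRows_one]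
  rcases Nat.lt_or_ge (ν 0 + 1) (μ 0) with hlarge | hsmall
  · have hrem0 : removeLEdge l μ 0 ≤ ν 0 := by
      rw [hrem]
      exact hν.antitone (Nat.zero_le _)
    have hcons := isPartition_consPart_consPart hl0 hμ hlarge hrem0
    have hreg := isLRegular_consPart_consPart hl hμ hμreg hlarge (by rwa [hν1]) h0 hrem0
    refine ⟨_, hcons, hreg, ?_, ?_⟩
    · rw [removeLEdge_consPart_consPart hl0 hμ hlarge hrem0, hν1]
    · have := hμ.lt_plen_iff (n := 0)
      have hinner : IsPartition (consPart (ν 0 + 1) (dropRows μ 1)) := hcons.drop 1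
      rw [hinner.plen_consPart (Nat.le_sub_one_of_lt hlarge) (by omega),
        (hμ.drop 1).plen_consPart (a := ν 0 + 1) (hinner.antitone zero_le_one) (by omega),
        hμ.plen_dropRows]
      omega
  · refine ⟨consPart (ν 0 + l) μ, hμ.cons (by omega), hμreg.cons hl ?_, ?_,
      hμ.plen_consPart (by omega) (by omega)⟩
    · have := hμ.antitone (l - 2).zero_le
      omega
    · rw [removeLEdge_consPart_add hl0 hμ hsmall, hν1]

theorem exists_removeLEdge_eq (hl : 2 ≤ l) {d : ℕ} (hd : d ≤ l) {ν : ℕ → ℕ} (hν : IsPartition ν)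
    (hreg : IsLRegular l ν) :
    ∃ μ, IsPartition μ ∧ IsLRegular l μ ∧ removeLEdge l μ = ν ∧ plen μ = plen ν + d := by
  induction hn : plen ν generalizing ν with
  | zero =>
    rw [hν.eq_zero (hν.plen_le_iff.mp hn.le), zero_add]
    exact exists_removeLEdge_eq_zero hl hd
  | succ n ih =>
    obtain ⟨μ, hμ, hμreg, hrem, hlen⟩ :=
      ih (hν.drop 1) (hreg.drop (by omega) 1) (by rw [hν.plen_dropRows, hn, Nat.add_sub_cancel])
    obtain ⟨μ', hμ', hμreg', hrem', hlen'⟩ := exists_removeLEdge_eq_consPart hl hν hreg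
      (hν.lt_plen_iff.mp (hn ▸ n.succ_pos)).ne' hμ hμreg hrem
    exact ⟨μ', hμ', hμreg', hrem', by omega⟩

theorem mullAux_spec (hl : 2 ≤ l) {n : ℕ} {p : ℕ → ℕ} (hp : IsPartition p) (hreg : IsLRegular l p)
    (hn : pdeg p ≤ n) :
    IsPartition (mullAux l n p) ∧ IsLRegular l (mullAux l n p) ∧
      plen (mullAux l n p) = mullLen l p := by
  have hl0 : 0 < l := by omega
  have hdeg := pdeg_removeLEdge_add_plen_le hl0 hp
  have spec_zero : IsPartition 0 ∧ IsLRegular l 0 ∧ plen 0 = mullLen l 0 :=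
    ⟨isPartition_zero, isLRegular_zero l, by rw [plen_zero, mullLen_zero]⟩
  induction n generalizing p with
  | zero => rwa [hp.eq_zero (hp.plen_le_iff.mp (by omega))]
  | succ n ih =>
    rw [mullAux]
    split_ifs with h0
    · rwa [hp.eq_zero h0]
    · have hlen := hp.lt_plen_iff.mpr (Nat.pos_of_ne_zero h0)
      have hrem := hp.removeLEdge hl0
      obtain ⟨hν, hνreg, hνlen⟩ := ih hrem (hreg.removeLEdge hl0 hp) (by omega)
        (pdeg_removeLEdge_add_plen_le hl0 hrem)
      obtain ⟨hle, hle'⟩ := mullLen_removeLEdge_le hl0 hp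
      obtain ⟨μ, hμ, hμreg, hμrem, hμlen⟩ := exists_removeLEdge_eq hl
        (d := mullLen l p - mullLen l (removeLEdge l p)) (by omega) hν hνreg
      have hspec := Classical.epsilon_spec (p := fun μ : ℕ → ℕ => IsPartition μ ∧ IsLRegular l μ ∧
        removeLEdge l μ = mullAux l n (removeLEdge l p) ∧ plen μ = mullLen l p)
        ⟨μ, hμ, hμreg, hμrem, by omega⟩
      exact ⟨hspec.1, hspec.2.1, hspec.2.2.2⟩

theorem plen_mull (hl : 2 ≤ l) {p : ℕ → ℕ} (hp : IsPartition p) (hreg : IsLRegular l p) :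
    plen (mull l p) = mullLen l p :=
  (mullAux_spec hl hp hreg le_rfl).2.2

end AddEdge

section Conjugate

variable {p : ℕ → ℕ}

theorem IsPartition.lt_conjP_iff (hp : IsPartition p) {i j : ℕ} : i < conjP p j ↔ j < p i := by
  constructor
  · contrapose!
    intro hle
    have hsub : (Finset.range (plen p)).filter (fun r => j < p r) ⊆ Finset.range i := fun r hr => by
      rw [Finset.mem_filter] at hr
      by_contra hir
      have := hp.antitone (not_lt.mp (mt Finset.mem_range.mpr hir))
      omega
    exact (Finset.card_le_card hsub).trans_eq (Finset.card_range i)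
  · intro hlt
    have hsub : Finset.range (i + 1) ⊆ (Finset.range (plen p)).filter fun r => j < p r :=
        fun r hr => by
      have := hp.antitone (Finset.mem_range_succ_iff.mp hr)
      rw [Finset.mem_filter, Finset.mem_range, hp.lt_plen_iff]
      omega
    exact (Finset.card_range (i + 1)).symm.le.trans (Finset.card_le_card hsub)

theorem IsPartition.conjP_le_iff (hp : IsPartition p) {i j : ℕ} : conjP p j ≤ i ↔ p i ≤ j := by
  rw [← not_lt, hp.lt_conjP_iff, not_lt]

theorem IsPartition.conjP (hp : IsPartition p) : IsPartition (conjP p) :=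
  isPartition_of_antitone (N := p 0)
    (fun _ _ hij => hp.conjP_le_iff.mpr ((hp.conjP_le_iff.mp le_rfl).trans hij))
    (Nat.eq_zero_of_le_zero (hp.conjP_le_iff.mpr le_rfl))

theorem isLRegular_conjP {l : ℕ} (hp : IsPartition p) (hres : IsLRestricted l p) :
    IsLRegular l (conjP p) := fun j hj heq => by
  obtain ⟨r, hr⟩ := Nat.exists_eq_succ_of_ne_zero hj
  have hlast : j + l - 1 < p r := hp.lt_conjP_iff.mp (by omega)
  have hnext : p (r + 1) ≤ j := hp.conjP_le_iff.mp hr.le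
  have := hres r
  omega

theorem conjP_zero : conjP 0 = 0 :=
  isPartition_zero.conjP.eq_zero (Nat.eq_zero_of_le_zero (isPartition_zero.conjP_le_iff.mpr le_rfl))

theorem conjP_sub (hp : IsPartition p) (h : ℕ) :
    conjP (fun r => p r - h) = dropRows (conjP p) h :=
  funext fun j => eq_of_forall_lt_iff fun i => by
    rw [(hp.comp (f := fun a => a - h) (fun _ _ hab => Nat.sub_le_sub_right hab h)
      (Nat.zero_sub h)).lt_conjP_iff, dropRows_apply, hp.lt_conjP_iff, Nat.lt_sub_iff_add_lt]

end Conjugate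

section Distinguished

variable {l m : ℕ} {p : ℕ → ℕ}

/-- The diagram of `p` has at most `n` columns, and its columns, padded to exactly `n` by empty ones
when `k = 0`, have lengths in the window `[k, k + m]`. The `l`-restricted `m`-distinguished
partitions are those with `l - m` columns in such a window. -/
structure ColumnsInWindow (n k m : ℕ) (p : ℕ → ℕ) : Prop where
  le : ∀ r, p r ≤ n
  eq_of_lt : ∀ r < k, p r = n
  eq_zero_of_le : ∀ r, k + m ≤ r → p r = 0

theorem IsDistinguished.exists_columnsInWindow (hdist : IsDistinguished l m p)
    (hres : IsLRestricted l p) : ∃ k, ColumnsInWindow (l - m) k m p := by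
  obtain ⟨k, a, pbar, hpbar, -, ha, ha0, ham, hp⟩ := hdist
  have ha_lt (i : ℕ) : a i < l - m := (ha 0 i i.zero_le).trans_lt ha0
  obtain rfl : pbar = 0 := hpbar.eq_zero_of_monotone <| monotone_nat_of_le_succ fun i => by
    by_contra! hlt
    have hdrop : (if i + 1 < k then l - m else a (i + 1 - k)) ≤
        if i < k then l - m else a (i - k) := by
      have := ha (i - k) (i + 1 - k) (by omega)
      have := ha_lt (i + 1 - k)
      split_ifs <;> omega
    have hmul : l * pbar (i + 1) + l ≤ l * pbar i := Nat.mul_le_mul_left l hlt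
    have := hres i
    rw [hp, hp] at this
    omega
  simp only [Pi.zero_apply, mul_zero, add_zero] at hp
  refine ⟨k, fun r => ?_, fun r hr => by rw [hp, if_pos hr], fun r hr => ?_⟩
  · rw [hp]
    have := ha_lt (r - k)
    split_ifs <;> omega
  · rw [hp, if_neg (by omega), ham _ (by omega)]

theorem ColumnsInWindow.isDistinguished {k : ℕ} (hcol : ColumnsInWindow (l - m) k m p) (hm : 0 < m)
    (hml : m < l) (hp : IsPartition p) : IsDistinguished l m p := by
  have hfull {r : ℕ} : r < conjP p (l - m - 1) ↔ p r = l - m := by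
    have := hcol.le r
    rw [hp.lt_conjP_iff]
    omega
  have hk : k ≤ conjP p (l - m - 1) := le_of_forall_lt fun r hr => hfull.mpr (hcol.eq_of_lt r hr)
  refine ⟨conjP p (l - m - 1), dropRows p (conjP p (l - m - 1)), 0, isPartition_zero, hm,
    (hp.drop _).1, ?_, fun i hi => hcol.eq_zero_of_le _ (by omega), fun i => ?_⟩
  · have := hp.conjP_le_iff.mp (le_refl (conjP p (l - m - 1)))
    rw [dropRows_apply, zero_add]
    omega
  · split_ifs with hi
    · exact hfull.mp hi
    · rw [dropRows_apply, Nat.sub_add_cancel (not_lt.mp hi)]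
      rfl

/-- `p` is a sum of `l`-restricted `m_i`-distinguished partitions, `0 < m_i < l`, with
`∑ m_i = m`. -/
def IsDistinguishedSum (l m : ℕ) (p : ℕ → ℕ) : Prop :=
  ∃ (t : ℕ) (ms : Fin t → ℕ) (lam : Fin t → (ℕ → ℕ)),
    (∀ i, 0 < ms i ∧ ms i < l ∧ IsPartition (lam i) ∧ IsLRestricted l (lam i) ∧
      IsDistinguished l (ms i) (lam i)) ∧
    (∑ i, ms i) = m ∧ ∀ k, p k = ∑ i, lam i k

theorem isDistinguishedSum_zero (l : ℕ) : IsDistinguishedSum l 0 0 :=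
  ⟨0, Fin.elim0, Fin.elim0, fun i => i.elim0, rfl, fun _ => rfl⟩

theorem IsDistinguishedSum.cons {m₀ : ℕ} {a : ℕ → ℕ} (hsum : IsDistinguishedSum l m p)
    (hm₀ : 0 < m₀) (hml : m₀ < l) (ha : IsPartition a) (hres : IsLRestricted l a)
    (hdist : IsDistinguished l m₀ a) : IsDistinguishedSum l (m₀ + m) (a + p) := by
  obtain ⟨t, ms, lam, hlam, hms, hp⟩ := hsum
  refine ⟨t + 1, Fin.cons m₀ ms, Fin.cons a lam, Fin.cases ⟨hm₀, hml, ha, hres, hdist⟩ hlam, ?_,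
    fun k => ?_⟩
  · simp only [Fin.sum_univ_succ, Fin.cons_zero, Fin.cons_succ, hms]
  · simp only [Fin.sum_univ_succ, Fin.cons_zero, Fin.cons_succ, Pi.add_apply, hp]

theorem IsDistinguishedSum.of_le {m' : ℕ} (hl : 2 ≤ l) (hsum : IsDistinguishedSum l m p)
    (hle : m ≤ m') : IsDistinguishedSum l m' p := by
  have hzero : IsDistinguished l 1 0 :=
    ColumnsInWindow.isDistinguished (k := 0)
      ⟨fun _ => Nat.zero_le _, fun _ h => absurd h (Nat.not_lt_zero _), fun _ _ => rfl⟩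
      one_pos hl isPartition_zero
  induction m', hle using Nat.le_induction with
  | base => exact hsum
  | succ n _ ih =>
    have := ih.cons one_pos hl isPartition_zero (fun _ => by simp only [Pi.zero_apply]; omega) hzero
    rwa [add_comm, zero_add] at this

theorem columnsInWindow_min_firstSeg (hl : 0 < l) (hp : IsPartition p) :
    ColumnsInWindow (firstSeg l (conjP p)) (conjP p (firstSeg l (conjP p) - 1))
      (l - firstSeg l (conjP p)) fun r => min (p r) (firstSeg l (conjP p)) where
  le _ := min_le_right _ _
  eq_of_lt r hr := by
    rw [hp.lt_conjP_iff] at hr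
    omega
  eq_zero_of_le r hr := by
    have := add_firstSeg_le hl hp.conjP
    have := firstSeg_le hl hp.conjP
    have := hp.conjP_le_iff (i := r) (j := 0)
    omega

/-- Each `l`-segment of `conjP p`, of `h` rows, splits off the first `h` columns of `p`. -/
theorem isDistinguishedSum_mullLen_conjP (hl : 0 < l) (hp : IsPartition p)
    (hres : IsLRestricted l p) : IsDistinguishedSum l (mullLen l (conjP p)) p := by
  induction hn : p 0 using Nat.strong_induction_on generalizing p with
  | _ n ih =>
    rcases Nat.eq_zero_or_pos (p 0) with h0 | h0
    · rw [hp.eq_zero h0, conjP_zero, mullLen_zero]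
      exact isDistinguishedSum_zero l
    have hpos := firstSeg_pos hl hp.conjP
    have hlt := (isLRegular_conjP hp hres).firstSeg_lt hl hp.conjP (hp.lt_conjP_iff.mpr h0).ne'
    have hcol := columnsInWindow_min_firstSeg hl hp
    have hmull := mullLen_add_firstSeg hl hp.conjP
    rw [← conjP_sub hp] at hmull
    set h := firstSeg l (conjP p)
    have hfirst : IsPartition fun r => min (p r) h :=
      hp.comp (f := fun a => min a h) (fun _ _ hab => min_le_min_right h hab) (Nat.zero_min h)
    have hrest : IsPartition fun r => p r - h :=
      hp.comp (f := fun a => a - h) (fun _ _ hab => Nat.sub_le_sub_right hab h) (Nat.zero_sub h)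
    have hsum := (ih (p 0 - h) (by omega) hrest (fun r => by have := hres r; omega) rfl).cons
      (m₀ := l - h) (by omega) (by omega) hfirst (fun r => by omega)
      (ColumnsInWindow.isDistinguished (by rwa [Nat.sub_sub_self hlt.le]) (by omega) (by omega)
        hfirst)
    convert hsum using 1
    · omega
    · funext r
      rw [Pi.add_apply]
      omega

end Distinguished

section LowerBound

variable {l n k m : ℕ} {q Q : ℕ → ℕ}

/-- `Q` arises from `q` by inserting `n` new parts, all of them in the window `[k, k + m]`; what is
recorded is the effect on the sorted sequences. -/
structure IsWindowInsertion (n k m : ℕ) (q Q : ℕ → ℕ) : Prop where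
  le : ∀ j, q j ≤ Q j
  le_max : ∀ j, Q j ≤ max (q j) (k + m)
  min_add : ∀ j, min (Q (j + n)) k = min (q j) k
  le_of_lt : ∀ j < n, k ≤ Q j

theorem ColumnsInWindow.isWindowInsertion_conjP {a p : ℕ → ℕ} (hcol : ColumnsInWindow n k m a)
    (ha : IsPartition a) (hp : IsPartition p) :
    IsWindowInsertion n k m (conjP p) (conjP (a + p)) where
  le j := le_of_forall_lt fun r hr => by
    rw [hp.lt_conjP_iff] at hr
    rw [(ha.add hp).lt_conjP_iff, Pi.add_apply]
    omega
  le_max j := by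
    rw [(ha.add hp).conjP_le_iff, Pi.add_apply, hcol.eq_zero_of_le _ (le_max_right _ _), zero_add,
      ← hp.conjP_le_iff]
    exact le_max_left _ _
  min_add j := eq_of_forall_lt_iff fun r => by
    rw [lt_min_iff, lt_min_iff, (ha.add hp).lt_conjP_iff, hp.lt_conjP_iff, Pi.add_apply]
    have := hcol.eq_of_lt r
    omega
  le_of_lt j hj := le_of_forall_lt fun r hr => by
    rw [(ha.add hp).lt_conjP_iff, Pi.add_apply, hcol.eq_of_lt r hr]
    omega

/-- Compares a segment of `q` starting in row `b` with a segment of `Q` ending just above row `c`: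
the segments of `Q` run `n` rows ahead of those of `q`, up to a correction in column lengths that
depends on whether `q b` lies below, in or above the window. -/
def SegmentBound (n k m : ℕ) (q Q : ℕ → ℕ) (b c : ℕ) : Prop :=
  n + b + Q c ≤ c + max (min (q b) k) (q b - m)

namespace IsWindowInsertion

theorem apply_sub_eq (hins : IsWindowInsertion n k m q Q) (hq : IsPartition q) {b c : ℕ}
    (hb : q b < k) (hbound : n + b + Q c ≤ c + k) : n ≤ c ∧ q (c - n) = Q c := by
  have hnc : n ≤ c := by
    by_contra! hcn
    have := hins.le_of_lt c hcn
    omega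
  have hmin := hins.min_add (c - n)
  rw [Nat.sub_add_cancel hnc] at hmin
  have hQ : Q c < k := by
    by_contra! hkQ
    have := hq.antitone (show b ≤ c - n by omega)
    omega
  exact ⟨hnc, by omega⟩

theorem segmentBound_of_le (hins : IsWindowInsertion n k m q Q) (hq : IsPartition q) {b c : ℕ}
    (hbound : n + b + Q c ≤ c + max (q b - m) k)
    (hshift : n ≤ c → q (c - n) = Q c → b ≤ c - n) : SegmentBound n k m q Q b c := by
  unfold SegmentBound
  rcases le_or_gt k (q b) with hkb | hbk
  · omega
  · obtain ⟨hnc, hval⟩ := hins.apply_sub_eq (c := c) hq hbk (by omega)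
    have hbc := hshift hnc hval
    have := hq.antitone hbc
    omega

theorem add_apply_nextRow_le_max (hins : IsWindowInsertion n k m q Q) (hl : 0 < n + m)
    (hQ : IsPartition Q) {b c : ℕ} (hbc : b ≤ c) :
    n + b + Q (nextRow (n + m) Q c) ≤ nextRow (n + m) Q c + max (q b - m) k := by
  have := add_apply_nextRow_le hl hQ c
  have := hQ.antitone hbc
  have := hins.le_max b
  omega

theorem segmentBound_nextRow (hins : IsWindowInsertion n k m q Q) (hl : 0 < n + m)
    (hq : IsPartition q) (hQ : IsPartition Q) {b c : ℕ} (hbound : SegmentBound n k m q Q b c) :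
    SegmentBound n k m q Q (nextRow (n + m) q b) (nextRow (n + m) Q c) := by
  unfold SegmentBound at hbound
  have hstep := add_apply_nextRow_le hl hQ c
  refine hins.segmentBound_of_le hq ?_ fun hnc hval => (nextRow_le_iff hl hq).mpr (by omega)
  rcases le_or_gt (q b) (k + m) with hle | hgt
  · have := nextRow_le_add hl hq b
    omega
  · refine hins.add_apply_nextRow_le_max hl hQ ((nextRow_le_iff hl hq).mpr ?_)
    have := hins.le c
    omega

theorem segmentBound_segStart (hins : IsWindowInsertion n k m q Q) (hl : 0 < n + m)
    (hq : IsPartition q) (hQ : IsPartition Q) (T : ℕ) :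
    SegmentBound n k m q Q (segStart (n + m) q T) (segStart (n + m) Q (T + 1)) := by
  induction T with
  | zero =>
    exact hins.segmentBound_of_le hq (hins.add_apply_nextRow_le_max hl hQ le_rfl)
      fun _ _ => Nat.zero_le _
  | succ T ih => exact hins.segmentBound_nextRow hl hq hQ ih

theorem mullLen_le (hins : IsWindowInsertion n k m q Q) (hl : 0 < n + m) (hq : IsPartition q)
    (hQ : IsPartition Q) : mullLen (n + m) Q ≤ mullLen (n + m) q + m := by
  obtain ⟨T, hT, hT'⟩ : ∃ T, plen q ≤ T ∧ plen Q ≤ T + 1 :=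
    ⟨max (plen q) (plen Q), le_max_left _ _, (le_max_right _ _).trans (Nat.le_succ _)⟩
  have hqT := apply_segStart_eq_zero hl hq hT
  have hQT := apply_segStart_eq_zero hl hQ hT'
  have hbound := hins.segmentBound_segStart hl hq hQ T
  have hmullq := mullLen_add_segStart_of_apply_eq_zero hl hq hqT
  have hmullQ := mullLen_add_segStart_of_apply_eq_zero hl hQ hQT
  rw [SegmentBound, hqT, Nat.zero_min, Nat.zero_sub, max_self] at hbound
  rw [mul_add_one] at hmullQ
  omega

end IsWindowInsertion

theorem mullLen_conjP_sum_le {ι : Type*} (s : Finset ι) {ms : ι → ℕ} {lam : ι → ℕ → ℕ}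
    (h : ∀ i ∈ s, ms i < l ∧ IsPartition (lam i) ∧ IsLRestricted l (lam i) ∧
      IsDistinguished l (ms i) (lam i)) :
    mullLen l (conjP (∑ i ∈ s, lam i)) ≤ ∑ i ∈ s, ms i := by
  induction s using Finset.cons_induction with
  | empty => rw [Finset.sum_empty, Finset.sum_empty, conjP_zero, mullLen_zero]
  | cons i s his ih =>
    rw [Finset.forall_mem_cons] at h
    obtain ⟨⟨hml, hlam, hres, hdist⟩, hs⟩ := h
    have hsum : IsPartition (∑ i ∈ s, lam i) := IsPartition.sum fun j hj => (hs j hj).2.1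
    obtain ⟨k, hcol⟩ := hdist.exists_columnsInWindow hres
    have hle := (hcol.isWindowInsertion_conjP hlam hsum).mullLen_le (by omega) hsum.conjP
      (hlam.add hsum).conjP
    rw [Nat.sub_add_cancel hml.le] at hle
    rw [Finset.sum_cons, Finset.sum_cons, add_comm (ms i)]
    exact hle.trans (Nat.add_le_add_right (ih hs) _)

theorem IsDistinguishedSum.mullLen_conjP_le {p : ℕ → ℕ} (hsum : IsDistinguishedSum l m p) :
    mullLen l (conjP p) ≤ m := by
  obtain ⟨t, ms, lam, hlam, rfl, hp⟩ := hsum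
  obtain rfl : p = ∑ i, lam i := funext fun k => by rw [hp, Finset.sum_apply]
  exact mullLen_conjP_sum_le Finset.univ fun i _ => (hlam i).2

end LowerBound

/-- Let `λ` be an `l`-restricted partition and `m ≥ 1`. Then `ℓ(Mull(λ')) ≤ m` (i.e. `λ`
is `m`-special) if and only if `λ = λ¹ + … + λᵗ` where each `λⁱ` is an `l`-restricted
`m_i`-distinguished partition for some `0 < m_i < l`, and `m = m_1 + … + m_t`. -/
theorem mSpecial_iff_sum_of_restricted_distinguished (l : ℕ) (hl : 2 ≤ l)
    (m : ℕ) (hm : 1 ≤ m) (p : ℕ → ℕ) (hp : IsPartition p) (hres : IsLRestricted l p) :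
    plen (mull l (conjP p)) ≤ m ↔
      ∃ (t : ℕ) (ms : Fin t → ℕ) (lam : Fin t → (ℕ → ℕ)),
        (∀ i, 0 < ms i ∧ ms i < l ∧ IsPartition (lam i) ∧ IsLRestricted l (lam i) ∧
          IsDistinguished l (ms i) (lam i)) ∧
        (∑ i, ms i) = m ∧ ∀ k, p k = ∑ i, lam i k := by
  rw [plen_mull hl hp.conjP (isLRegular_conjP hp hres)]
  exact ⟨(isDistinguishedSum_mullLen_conjP (by omega) hp hres).of_le hl,
    IsDistinguishedSum.mullLen_conjP_le⟩

end
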